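/- For z = x + iy with y > 0, let A(z) ∈ M₃(ℝ) be the matrix whose columns are f(z), y·(∂f/∂x)(z), and y·(∂f/∂y)(z), and let h(z) be the Cheng–Yau matrix at f(z). Then A(z)ᵀ·h(z)·A(z) = I₃; that is, the triple (f, y·f_x, y·f_y) is an orthonormal frame for the Cheng–Yau metric of the cone along the hyperboloid. -/

import Mathlib

open Matrix

noncomputable section

/-- The parametrization `f(x+iy) = (x/y, (x²+y²-1)/(2y), (x²+y²+1)/(2y))` of the
hyperboloid. -/
def f (z : ℂ) : Fin 3 → ℝ :=
  ![z.re / z.im, (z.re ^ 2 + z.im ^ 2 - 1) / (2 * z.im),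
    (z.re ^ 2 + z.im ^ 2 + 1) / (2 * z.im)]

/-- The matrix whose columns are `f(z)`, `y·(∂f/∂x)(z)` and `y·(∂f/∂y)(z)`. -/
def frameA (z : ℂ) : Matrix (Fin 3) (Fin 3) ℝ :=
  Matrix.of fun i j =>
    ![f z, z.im • fderiv ℝ f z 1, z.im • fderiv ℝ f z Complex.I] j i

/-- The matrix of the Cheng–Yau metric at the point `f(z)` of the hyperboloid,
where `z = x + iy` with `y > 0`. -/
def hR (z : ℂ) : Matrix (Fin 3) (Fin 3) ℝ :=
  let x := z.re; let y := z.im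
  !![2 * x ^ 2 / y ^ 2 + 1, x * (x ^ 2 + y ^ 2 - 1) / y ^ 2,
       -x * (x ^ 2 + y ^ 2 + 1) / y ^ 2;
     x * (x ^ 2 + y ^ 2 - 1) / y ^ 2, (x ^ 2 + y ^ 2 - 1) ^ 2 / (2 * y ^ 2) + 1,
       -((x ^ 2 + y ^ 2 - 1) * (x ^ 2 + y ^ 2 + 1)) / (2 * y ^ 2);
     -x * (x ^ 2 + y ^ 2 + 1) / y ^ 2,
       -((x ^ 2 + y ^ 2 - 1) * (x ^ 2 + y ^ 2 + 1)) / (2 * y ^ 2),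
       (x ^ 2 + y ^ 2 + 1) ^ 2 / (2 * y ^ 2) - 1]

end

theorem f_hasFDerivAt_apply (z : ℂ) (hz : z.im ≠ 0) (v : ℂ) :
    fderiv ℝ f z v =
      ![v.re / z.im - z.re * v.im / z.im ^ 2,
        (2 * z.re * v.re + 2 * z.im * v.im) / (2 * z.im)
          - (z.re ^ 2 + z.im ^ 2 - 1) * v.im / (2 * z.im ^ 2),
        (2 * z.re * v.re + 2 * z.im * v.im) / (2 * z.im)
          - (z.re ^ 2 + z.im ^ 2 + 1) * v.im / (2 * z.im ^ 2)] := by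
  have hre : HasFDerivAt (fun w : ℂ => w.re) Complex.reCLM z := Complex.reCLM.hasFDerivAt
  have him : HasFDerivAt (fun w : ℂ => w.im) Complex.imCLM z := Complex.imCLM.hasFDerivAt
  have hinv : HasFDerivAt (fun w : ℂ => (w.im)⁻¹) (-(z.im ^ 2)⁻¹ • Complex.imCLM) z :=
    (hasDerivAt_inv hz).comp_hasFDerivAt z him
  have hs := (hre.pow 2).add (him.pow 2)
  have h0 := hre.mul hinv
  have h1 := ((hs.sub_const 1).mul hinv).mul_const (2⁻¹ : ℝ)
  have h2 := ((hs.add_const 1).mul hinv).mul_const (2⁻¹ : ℝ)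
  have e0 : (fun w : ℂ => f w 0) = fun w => w.re * (w.im)⁻¹ := by
    funext w; simp [f, div_eq_mul_inv]
  have e1 : (fun w : ℂ => f w 1) = fun w => (w.re ^ 2 + w.im ^ 2 - 1) * (w.im)⁻¹ * 2⁻¹ := by
    funext w; simp [f, div_eq_mul_inv]; ring
  have e2 : (fun w : ℂ => f w 2) = fun w => (w.re ^ 2 + w.im ^ 2 + 1) * (w.im)⁻¹ * 2⁻¹ := by
    funext w; simp [f, div_eq_mul_inv]; ring
  have d0 := h0.congr_of_eventuallyEq (Filter.EventuallyEq.of_eq e0)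
  have d1 := h1.congr_of_eventuallyEq (Filter.EventuallyEq.of_eq e1)
  have d2 := h2.congr_of_eventuallyEq (Filter.EventuallyEq.of_eq e2)
  have hd : DifferentiableAt ℝ f z := by
    rw [differentiableAt_pi]
    intro i
    fin_cases i
    · exact d0.differentiableAt
    · exact d1.differentiableAt
    · exact d2.differentiableAt
  have key := fun i => (hasFDerivAt_pi'.1 hd.hasFDerivAt) i
  have k : ∀ (i : Fin 3) (L : ℂ →L[ℝ] ℝ), HasFDerivAt (fun w : ℂ => f w i) L z →
      fderiv ℝ f z v i = L v := fun i L h => by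
    rw [← (key i).unique h]; rfl
  ext i
  fin_cases i
  · refine (k 0 _ d0).trans ?_
    simp
    field_simp
    ring
  · refine (k 1 _ d1).trans ?_
    simp
    field_simp
    ring
  · refine (k 2 _ d2).trans ?_
    simp
    field_simp
    ring

/-- The triple `(f, y·f_x, y·f_y)` is an orthonormal frame for the Cheng–Yau
metric along the hyperboloid: `A(z)ᵀ·h(z)·A(z) = I₃`. -/
theorem stmt17 (z : ℂ) (hz : 0 < z.im) :
    (frameA z)ᵀ * hR z * frameA z = 1 := by
  have hy : z.im ≠ 0 := hz.ne'
  have hA : frameA z = !![z.re / z.im, 1, -z.re / z.im;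
      (z.re ^ 2 + z.im ^ 2 - 1) / (2 * z.im), z.re, (z.im ^ 2 - z.re ^ 2 + 1) / (2 * z.im);
      (z.re ^ 2 + z.im ^ 2 + 1) / (2 * z.im), z.re, (z.im ^ 2 - z.re ^ 2 - 1) / (2 * z.im)] := by
    ext i j
    simp only [frameA, f_hasFDerivAt_apply z hy]
    fin_cases i <;> fin_cases j <;> simp [f] <;> field_simp <;> ring
  rw [hA]
  ext i j
  fin_cases i <;> fin_cases j <;>
    simp [hR, Matrix.mul_apply, Fin.sum_univ_three] <;> field_simp <;> ring
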